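/- The multiset union of the adjacency spectrum of the star graph X_3 with two copies of the spectrum of K_4 equals the multiset union of the spectrum of the cube graph with two copies of the spectrum of the truncated tetrahedron graph. -/

import Mathlib

open Equiv Equiv.Perm Polynomial
open scoped Classical

/-- The star graph `X_3 = Cay(S_4, {(1,4),(2,4),(3,4)})`. -/
def starGraph3 : SimpleGraph (Equiv.Perm (Fin 4)) :=
  SimpleGraph.fromRel (fun ξ η =>
    ∃ i : Fin 3, η = ξ * Equiv.swap (Fin.castSucc i) (Fin.last 3))

/-- The cube graph `Q_3`: vertices are `{0,1}^3`, adjacent iff they differ in exactly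
one coordinate. -/
def cubeGraph : SimpleGraph (Fin 3 → Bool) :=
  SimpleGraph.fromRel (fun x y =>
    (Finset.univ.filter fun i : Fin 3 => x i ≠ y i).card = 1)

/-- The truncated tetrahedron graph, realized as the quotient of `X_3` by the right
action of `⟨(1,2)⟩`: vertices are the left cosets, adjacency is induced from `X_3`. -/
def truncT : SimpleGraph
    (Equiv.Perm (Fin 4) ⧸ Subgroup.zpowers (Equiv.swap (0 : Fin 4) 1)) :=
  SimpleGraph.fromRel (fun a b =>
    ∃ ξ η : Equiv.Perm (Fin 4),
      (ξ : Equiv.Perm (Fin 4) ⧸ Subgroup.zpowers (Equiv.swap (0 : Fin 4) 1)) = a ∧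
      (η : Equiv.Perm (Fin 4) ⧸ Subgroup.zpowers (Equiv.swap (0 : Fin 4) 1)) = b ∧
      starGraph3.Adj ξ η)

/-- The adjacency spectrum (the multiset of real roots of the characteristic polynomial
of the adjacency matrix) of a finite graph. -/
noncomputable def adjSpectrum {V : Type*} [Fintype V] (G : SimpleGraph V) :
    Multiset ℝ :=
  (SimpleGraph.adjMatrix ℝ G).charpoly.roots

/-! The stabilizer `S_3` of a point in `S_4` acts on `X_3` by right multiplication, and `K_4`, the
cube and the truncated tetrahedron are the quotients of `X_3` by `S_3`, `C_3` and `C_2`, with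
covering projections. Pulling functions back, the multiplicity of `μ` in the spectrum of the
quotient by `K` is the dimension of `E ^ K`, where `E` is the generalized `μ`-eigenspace of `X_3`.
Now `S_3` is a Frobenius group, partitioned into its kernel `N = C_3` and the conjugates of
`H \ {1}` by `N`, where `H = C_2`. Averaging the character of `E` over this partition gives
`dim E + |H| dim E ^ S_3 = dim E ^ N + |H| dim E ^ H`. -/

section FrobeniusPair

variable {Γ : Type*} [Group Γ]

/-- `Γ` is a Frobenius group with kernel `N` and complement `H`, encoded by the partition of `Γ`
into `N` and the conjugates of `H \ {1}` by the elements of `N`. -/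
def IsFrobeniusPair (N H : Subgroup Γ) : Prop :=
  Set.BijOn (fun x : Γ × Γ => x.1 * x.2 * x.1⁻¹) ((N : Set Γ) ×ˢ ((H : Set Γ) \ {1})) (N : Set Γ)ᶜ

namespace IsFrobeniusPair

variable {N H : Subgroup Γ}

theorem sum_add_card_nsmul [Fintype Γ] {M : Type*} [AddCommMonoid M] (hNH : IsFrobeniusPair N H)
    {χ : Γ → M} (hχ : ∀ g h, χ (g * h * g⁻¹) = χ h) :
    ∑ g, χ g + Nat.card N • χ 1 = ∑ n : N, χ n + Nat.card N • ∑ h : H, χ h := by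
  let kernel : Finset Γ := (N : Set Γ).toFinset
  let complement : Finset Γ := (H : Set Γ).toFinset
  have conj_bijOn : Set.BijOn (fun x : Γ × Γ => x.1 * x.2 * x.1⁻¹)
      ↑(kernel ×ˢ complement.erase 1) ↑(kernelᶜ) := by
    simpa [kernel, complement, IsFrobeniusPair] using hNH
  have sum_compl : ∑ g ∈ kernelᶜ, χ g = Nat.card N • ∑ h ∈ complement.erase 1, χ h := by
    rw [← Finset.sum_nbij _ conj_bijOn.mapsTo conj_bijOn.injOn conj_bijOn.surjOn
      fun x _ => (hχ x.1 x.2).symm, Finset.sum_product]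
    simp [kernel, Nat.card_eq_fintype_card]
  have sum_coe (K : Subgroup Γ) : ∑ k : K, χ k = ∑ g ∈ (K : Set Γ).toFinset, χ g :=
    (Finset.sum_subtype _ (by simp) χ).symm
  rw [← Finset.sum_add_sum_compl kernel, sum_compl, add_assoc, ← nsmul_add,
    Finset.sum_erase_add _ _ (by simp [complement, H.one_mem]), sum_coe, sum_coe]

theorem card_eq [Finite Γ] (hNH : IsFrobeniusPair N H) :
    Nat.card Γ = Nat.card N * Nat.card H := by
  cases nonempty_fintype Γ
  have := hNH.sum_add_card_nsmul (χ := fun _ => 1) fun _ _ => rfl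
  simp only [Finset.sum_const, Finset.card_univ, smul_eq_mul, mul_one, ← Nat.card_eq_fintype_card]
    at this
  lia

end IsFrobeniusPair

end FrobeniusPair

section FixedSubmodule

variable {k Γ V : Type*} [Field k] [Group Γ] [AddCommGroup V] [Module k V]

/-- The subspace `V ^ K` of vectors fixed by the subgroup `K`. -/
noncomputable def fixedSubmodule (ρ : Representation k Γ V) (K : Subgroup Γ) : Submodule k V :=
  Representation.invariants (ρ.comp K.subtype)

theorem mem_fixedSubmodule {ρ : Representation k Γ V} {K : Subgroup Γ} {v : V} :
    v ∈ fixedSubmodule ρ K ↔ ∀ g ∈ K, ρ g v = v := by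
  simp [fixedSubmodule]

variable [CharZero k] [FiniteDimensional k V]

theorem sum_character_eq_card_mul_finrank_fixedSubmodule (ρ : Representation k Γ V)
    (K : Subgroup Γ) [Fintype K] :
    ∑ g : K, ρ.character g = Nat.card K * Module.finrank k (fixedSubmodule ρ K) := by
  have card_ne_zero : (Nat.card K : k) ≠ 0 := Nat.cast_ne_zero.2 Nat.card_pos.ne'
  let := invertibleOfNonzero card_ne_zero
  rw [fixedSubmodule, ← Representation.card_inv_mul_sum_char_eq_finrank,
    mul_inv_cancel_left₀ card_ne_zero]
  rfl

theorem IsFrobeniusPair.finrank_fixedSubmodule [Finite Γ] {N H : Subgroup Γ}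
    (hNH : IsFrobeniusPair N H) (ρ : Representation k Γ V) :
    Module.finrank k V + Nat.card H * Module.finrank k (fixedSubmodule ρ ⊤) =
      Module.finrank k (fixedSubmodule ρ N) +
        Nat.card H * Module.finrank k (fixedSubmodule ρ H) := by
  cases nonempty_fintype Γ
  have sum_top : ∑ g : (⊤ : Subgroup Γ), ρ.character g = ∑ g, ρ.character g :=
    Fintype.sum_equiv Subgroup.topEquiv.toEquiv _ _ fun _ => rfl
  have character_sum := hNH.sum_add_card_nsmul fun g h => ρ.char_conj h g
  rw [← sum_top, sum_character_eq_card_mul_finrank_fixedSubmodule,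
    sum_character_eq_card_mul_finrank_fixedSubmodule,
    sum_character_eq_card_mul_finrank_fixedSubmodule, ρ.char_one, Subgroup.card_top,
    hNH.card_eq] at character_sum
  simp only [nsmul_eq_mul] at character_sum
  norm_cast at character_sum
  refine mul_left_cancel₀ (Nat.card_pos (α := N)).ne' ?_
  linarith

end FixedSubmodule

section Commute

variable {k Γ V : Type*} [Field k] [Group Γ] [AddCommGroup V] [Module k V]
  {ρ : Representation k Γ V} {T : Module.End k V}

theorem mapsTo_fixedSubmodule (hT : ∀ g, Commute T (ρ g)) (K : Subgroup Γ) :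
    ∀ v ∈ fixedSubmodule ρ K, T v ∈ fixedSubmodule ρ K := by
  simp only [mem_fixedSubmodule]
  intro v hv g hg
  rw [← Module.End.mul_apply, ← (hT g).eq, Module.End.mul_apply, hv g hg]

/-- The endomorphism induced by `T` on the subspace `V ^ K`. -/
noncomputable def fixedEnd (hT : ∀ g, Commute T (ρ g)) (K : Subgroup Γ) :
    Module.End k (fixedSubmodule ρ K) :=
  T.restrict (mapsTo_fixedSubmodule hT K)

/-- The representation on the generalized eigenspace of a commuting endomorphism. -/
def maxGenEigenspaceRep (hT : ∀ g, Commute T (ρ g)) (μ : k) :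
    Representation k Γ (T.maxGenEigenspace μ) :=
  ρ.subrepresentation _ fun g => Module.End.mapsTo_maxGenEigenspace_of_comm (hT g) μ

theorem finrank_comap_subtype_comm (p q : Submodule k V) :
    Module.finrank k (p.comap q.subtype) = Module.finrank k (q.comap p.subtype) := by
  rw [← Submodule.finrank_map_subtype_eq, ← Submodule.finrank_map_subtype_eq,
    Submodule.map_comap_subtype, Submodule.map_comap_subtype, inf_comm]

variable [FiniteDimensional k V]

theorem count_roots_charpoly (T : Module.End k V) (μ : k) :
    T.charpoly.roots.count μ = Module.finrank k (T.maxGenEigenspace μ) := by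
  rw [count_roots, T.finrank_maxGenEigenspace_eq]

theorem count_roots_charpoly_fixedEnd (hT : ∀ g, Commute T (ρ g)) (K : Subgroup Γ) (μ : k) :
    (fixedEnd hT K).charpoly.roots.count μ =
      Module.finrank k (fixedSubmodule (maxGenEigenspaceRep hT μ) K) := by
  have fixed_eq_comap : fixedSubmodule (maxGenEigenspaceRep hT μ) K =
      (fixedSubmodule ρ K).comap (T.maxGenEigenspace μ).subtype := by
    ext v
    simp only [mem_fixedSubmodule, Submodule.mem_comap, Submodule.subtype_apply]
    exact forall₂_congr fun g _ => Subtype.ext_iff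
  rw [count_roots_charpoly, fixed_eq_comap, finrank_comap_subtype_comm, fixedEnd,
    Module.End.maxGenEigenspace, Module.End.genEigenspace_restrict]

theorem IsFrobeniusPair.roots_charpoly_fixedEnd [Finite Γ] [CharZero k] {N H : Subgroup Γ}
    (hNH : IsFrobeniusPair N H) (hT : ∀ g, Commute T (ρ g)) :
    T.charpoly.roots + Nat.card H • (fixedEnd hT ⊤).charpoly.roots =
      (fixedEnd hT N).charpoly.roots + Nat.card H • (fixedEnd hT H).charpoly.roots := by
  ext μ
  simp only [Multiset.count_add, Multiset.count_nsmul, count_roots_charpoly_fixedEnd]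
  rw [count_roots_charpoly]
  exact hNH.finrank_fixedSubmodule (maxGenEigenspaceRep hT μ)

end Commute

section Covering

variable {Γ V W : Type*} [Group Γ] {G : SimpleGraph V} {G' : SimpleGraph W}

/-- The action of graph automorphisms on functions on the vertices, `(γ • f) v = f (γ⁻¹ • v)`. -/
def vertexFunctionRep (φ : Γ →* (G ≃g G)) : Representation ℝ Γ (V → ℝ) where
  toFun γ := LinearMap.funLeft ℝ ℝ (φ γ⁻¹)
  map_one' := by
    ext
    simp [LinearMap.funLeft]
  map_mul' γ δ := by
    ext f v
    simp [LinearMap.funLeft]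

/-- `p` exhibits `G'` as the quotient of `G` by the subgroup `K` of a group acting on `G`: its
fibres are the orbits of `K`, and it is a covering, i.e. a bijection on neighbourhoods. -/
structure IsOrbitCovering (φ : Γ →* (G ≃g G)) (K : Subgroup Γ) (G' : SimpleGraph W)
    (p : V → W) : Prop where
  surjective : Function.Surjective p
  apply_eq_iff : ∀ v w, p v = p w ↔ ∃ γ ∈ K, φ γ v = w
  bijOn_neighborSet : ∀ v, Set.BijOn p (G.neighborSet v) (G'.neighborSet (p v))

theorem adjMatrix_mulVec_comp [Fintype V] [Fintype W]
    {p : V → W} (hp : ∀ v, Set.BijOn p (G.neighborSet v) (G'.neighborSet (p v))) (f : W → ℝ) :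
    (G.adjMatrix ℝ).mulVec (f ∘ p) = (G'.adjMatrix ℝ).mulVec f ∘ p := by
  ext v
  have hpv : Set.BijOn p ↑(G.neighborFinset v) ↑(G'.neighborFinset (p v)) := by
    simpa only [SimpleGraph.coe_neighborFinset] using hp v
  simp only [Function.comp_apply, SimpleGraph.adjMatrix_mulVec_apply]
  exact Finset.sum_nbij p hpv.mapsTo hpv.injOn hpv.surjOn fun _ _ => rfl

theorem bijOn_neighborSet_of_iso (e : G ≃g G') (v : V) :
    Set.BijOn e (G.neighborSet v) (G'.neighborSet (e v)) :=
  ⟨fun _ => e.map_adj_iff.2, e.injective.injOn, fun w hw =>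
    ⟨e.symm w, e.map_adj_iff.1 (by simpa using hw), e.apply_symm_apply w⟩⟩

theorem commute_adjMatrix_vertexFunctionRep [Fintype V] (φ : Γ →* (G ≃g G)) (γ : Γ) :
    Commute (G.adjMatrix ℝ).mulVecLin (vertexFunctionRep φ γ) :=
  LinearMap.ext (adjMatrix_mulVec_comp (bijOn_neighborSet_of_iso (φ γ⁻¹)))

namespace IsOrbitCovering

variable {φ : Γ →* (G ≃g G)} {K : Subgroup Γ} {p : V → W}

theorem mem_fixedSubmodule_iff (hp : IsOrbitCovering φ K G' p) {f : V → ℝ} :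
    f ∈ fixedSubmodule (vertexFunctionRep φ) K ↔ f.FactorsThrough p := by
  rw [mem_fixedSubmodule]
  constructor
  · intro hf v w hvw
    obtain ⟨γ, hγ, rfl⟩ := (hp.apply_eq_iff v w).1 hvw
    simpa [vertexFunctionRep, LinearMap.funLeft] using congrFun (hf γ hγ) (φ γ v)
  · intro hf γ hγ
    ext v
    exact hf ((hp.apply_eq_iff _ _).2 ⟨γ, hγ, by simp⟩)

/-- Functions on the quotient graph, identified with the `K`-invariant functions by pullback. -/
noncomputable def pullback (hp : IsOrbitCovering φ K G' p) :
    (W → ℝ) ≃ₗ[ℝ] fixedSubmodule (vertexFunctionRep φ) K :=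
  LinearEquiv.ofBijective
    ((LinearMap.funLeft ℝ ℝ p).codRestrict _ fun f =>
      hp.mem_fixedSubmodule_iff.2 fun _ _ h => congrArg f h)
    ⟨fun _ _ h => hp.surjective.injective_comp_right (congrArg Subtype.val h), fun f =>
      ⟨f.1 ∘ Function.surjInv hp.surjective, Subtype.ext <| funext fun v =>
        hp.mem_fixedSubmodule_iff.1 f.2 (Function.surjInv_eq hp.surjective (p v))⟩⟩

theorem roots_charpoly_fixedEnd_adjMatrix [Fintype V] [Fintype W] (hp : IsOrbitCovering φ K G' p) :
    (fixedEnd (commute_adjMatrix_vertexFunctionRep φ) K).charpoly.roots = adjSpectrum G' := by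
  have conj_adj : hp.pullback.conj (G'.adjMatrix ℝ).mulVecLin =
      fixedEnd (commute_adjMatrix_vertexFunctionRep φ) K := by
    ext1 f
    obtain ⟨f, rfl⟩ := hp.pullback.surjective f
    rw [LinearEquiv.conj_apply_apply, LinearEquiv.symm_apply_apply]
    exact Subtype.ext (adjMatrix_mulVec_comp hp.bijOn_neighborSet f).symm
  rw [← conj_adj, LinearEquiv.charpoly_conj, Matrix.charpoly_mulVecLin, adjSpectrum]

end IsOrbitCovering

theorem IsFrobeniusPair.adjSpectrum_add_nsmul [Finite Γ] {N H : Subgroup Γ}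
    (hNH : IsFrobeniusPair N H) {V V' V₁ V₂ : Type*}
    [Fintype V] [Fintype V'] [Fintype V₁] [Fintype V₂]
    {G : SimpleGraph V} {G' : SimpleGraph V'} {G₁ : SimpleGraph V₁} {G₂ : SimpleGraph V₂}
    {φ : Γ →* (G ≃g G)} {p' : V → V'} {p₁ : V → V₁} {p₂ : V → V₂}
    (hp' : IsOrbitCovering φ ⊤ G' p') (hp₁ : IsOrbitCovering φ N G₁ p₁)
    (hp₂ : IsOrbitCovering φ H G₂ p₂) :
    adjSpectrum G + Nat.card H • adjSpectrum G' =
      adjSpectrum G₁ + Nat.card H • adjSpectrum G₂ := by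
  have := hNH.roots_charpoly_fixedEnd (commute_adjMatrix_vertexFunctionRep φ)
  rwa [hp'.roots_charpoly_fixedEnd_adjMatrix, hp₁.roots_charpoly_fixedEnd_adjMatrix,
    hp₂.roots_charpoly_fixedEnd_adjMatrix, Matrix.charpoly_mulVecLin] at this

end Covering

theorem starGraph3_adj {ξ η : Perm (Fin 4)} :
    starGraph3.Adj ξ η ↔ ∃ i : Fin 3, ξ * swap i.castSucc (Fin.last 3) = η := by
  simp only [starGraph3, SimpleGraph.fromRel_adj]
  constructor
  · rintro ⟨-, ⟨i, rfl⟩ | ⟨i, rfl⟩⟩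
    · exact ⟨i, rfl⟩
    · exact ⟨i, by simp⟩
  · rintro ⟨i, rfl⟩
    exact ⟨by simpa using i.castSucc_ne_last, .inl ⟨i, rfl⟩⟩

/-- The copy of `S_3` in `S_4` fixing the last point; it permutes the generators of `X_3` by
conjugation. -/
abbrev lastStabilizer : Subgroup (Perm (Fin 4)) := MulAction.stabilizer _ (Fin.last 3)

theorem mem_lastStabilizer {γ : Perm (Fin 4)} : γ ∈ lastStabilizer ↔ γ (Fin.last 3) = Fin.last 3 :=
  Iff.rfl

theorem inv_mul_mem_lastStabilizer {ξ η : Perm (Fin 4)} :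
    ξ⁻¹ * η ∈ lastStabilizer ↔ ξ (Fin.last 3) = η (Fin.last 3) := by
  rw [mem_lastStabilizer, mul_apply, inv_eq_iff_eq, eq_comm]

theorem starGraph3_adj_mul_right {γ : Perm (Fin 4)} (hγ : γ ∈ lastStabilizer) {ξ η : Perm (Fin 4)}
    (h : starGraph3.Adj ξ η) : starGraph3.Adj (ξ * γ) (η * γ) := by
  obtain ⟨i, rfl⟩ := starGraph3_adj.1 h
  have inv_last : γ⁻¹ (Fin.last 3) = Fin.last 3 := lastStabilizer.inv_mem hγ
  obtain ⟨j, hj⟩ := Fin.exists_castSucc_eq.2 fun h : γ⁻¹ i.castSucc = Fin.last 3 =>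
    i.castSucc_ne_last (γ⁻¹.injective (h.trans inv_last.symm))
  refine starGraph3_adj.2 ⟨j, ?_⟩
  have conj_swap := swap_apply_apply γ⁻¹ i.castSucc (Fin.last 3)
  rw [inv_last] at conj_swap
  rw [hj, conj_swap]
  group

/-- The action of `S_3` on `X_3` by right multiplication, inverted to make it a left action. -/
def starAut : lastStabilizer →* (starGraph3 ≃g starGraph3) where
  toFun γ :=
    { toEquiv := Equiv.mulRight (γ⁻¹ : Perm (Fin 4))
      map_rel_iff' := ⟨fun h => by simpa using starGraph3_adj_mul_right γ.2 h,
        starGraph3_adj_mul_right (inv_mem γ.2)⟩ }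
  map_one' := by ext; simp
  map_mul' γ δ := by ext; simp [mul_assoc]

theorem isOrbitCovering_starAut {W : Type*} {G' : SimpleGraph W} {p : Perm (Fin 4) → W}
    {K : Subgroup (Perm (Fin 4))} (surjective : Function.Surjective p)
    (apply_eq_iff : ∀ ξ η, p ξ = p η ↔ ξ (Fin.last 3) = η (Fin.last 3) ∧ ξ⁻¹ * η ∈ K)
    (adj_iff : ∀ ξ w, G'.Adj (p ξ) w ↔ ∃ i : Fin 3, p (ξ * swap i.castSucc (Fin.last 3)) = w) :
    IsOrbitCovering starAut (K.subgroupOf lastStabilizer) G' p where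
  surjective := surjective
  apply_eq_iff ξ η := by
    rw [apply_eq_iff, ← inv_mul_mem_lastStabilizer]
    constructor
    · rintro ⟨hS, hK⟩
      exact ⟨⟨ξ⁻¹ * η, hS⟩⁻¹, inv_mem hK, by simp [starAut]⟩
    · rintro ⟨γ, hγ, rfl⟩
      simpa [starAut] using Subgroup.mem_subgroupOf.1 hγ
  bijOn_neighborSet ξ := by
    refine ⟨fun η hη => ?_, fun η hη θ hθ h => ?_, fun w hw => ?_⟩
    · obtain ⟨i, rfl⟩ := starGraph3_adj.1 hη
      exact (adj_iff _ _).2 ⟨i, rfl⟩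
    · obtain ⟨i, rfl⟩ := starGraph3_adj.1 hη
      obtain ⟨j, rfl⟩ := starGraph3_adj.1 hθ
      have hij : i = j := by simpa using ((apply_eq_iff _ _).1 h).1
      rw [hij]
    · obtain ⟨i, rfl⟩ := (adj_iff _ _).1 hw
      exact ⟨_, starGraph3_adj.2 ⟨i, rfl⟩, rfl⟩

theorem exists_apply_mul_swap_eq_iff {ξ : Perm (Fin 4)} {a : Fin 4} :
    (∃ i : Fin 3, (ξ * swap i.castSucc (Fin.last 3)) (Fin.last 3) = a) ↔ ξ (Fin.last 3) ≠ a := by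
  obtain ⟨b, rfl⟩ := ξ.surjective a
  simp only [mul_apply, swap_apply_right, EmbeddingLike.apply_eq_iff_eq, ne_eq]
  exact Fin.exists_castSucc_eq.trans ne_comm

theorem isOrbitCovering_completeGraph :
    IsOrbitCovering starAut ⊤ (⊤ : SimpleGraph (Fin 4)) fun ξ => ξ (Fin.last 3) := by
  rw [← Subgroup.top_subgroupOf]
  refine isOrbitCovering_starAut (fun a => ⟨swap (Fin.last 3) a, by simp⟩) (by simp) fun ξ a => ?_
  rw [SimpleGraph.top_adj, exists_apply_mul_swap_eq_iff]

/-- A labelling of the cube vertices by `Fin 4 × {±1}`: the point `a` picks one of the four long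
diagonals and the sign `ε` one of its two ends, so that vertices with the same sign on different
diagonals differ in two coordinates. -/
def cubeVertex (a : Fin 4) (ε : ℤˣ) : Fin 3 → Bool :=
  fun i => (a = i.castSucc ∨ a = Fin.last 3) ^^ (ε = 1)

theorem cubeVertex_bijective : Function.Bijective fun x : Fin 4 × ℤˣ => cubeVertex x.1 x.2 := by
  refine (Fintype.bijective_iff_injective_and_card _).2 ⟨?_, by simp⟩
  unfold Function.Injective
  decide +kernel

theorem cubeVertex_inj {a b : Fin 4} {ε δ : ℤˣ} :
    cubeVertex a ε = cubeVertex b δ ↔ a = b ∧ ε = δ :=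
  (cubeVertex_bijective.injective.eq_iff (a := (a, ε)) (b := (b, δ))).trans Prod.mk_inj

theorem cubeGraph_adj {a b : Fin 4} {ε δ : ℤˣ} :
    cubeGraph.Adj (cubeVertex a ε) (cubeVertex b δ) ↔ a ≠ b ∧ δ = -ε := by
  unfold cubeGraph
  rw [SimpleGraph.fromRel_adj]
  revert a b ε δ
  decide +kernel

theorem isOrbitCovering_cubeGraph :
    IsOrbitCovering starAut ((alternatingGroup (Fin 4)).subgroupOf lastStabilizer) cubeGraph
      fun ξ => cubeVertex (ξ (Fin.last 3)) (sign ξ) := by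
  refine isOrbitCovering_starAut (fun w => ?_) (fun ξ η => ?_) fun ξ w => ?_
  · obtain ⟨⟨a, ε⟩, rfl⟩ := cubeVertex_bijective.surjective w
    have exists_apply_sign : ∀ a ε, ∃ ξ : Perm (Fin 4), ξ (Fin.last 3) = a ∧ sign ξ = ε := by
      decide
    obtain ⟨ξ, rfl, rfl⟩ := exists_apply_sign a ε
    exact ⟨ξ, rfl⟩
  · rw [cubeVertex_inj, mem_alternatingGroup, map_mul, map_inv, inv_mul_eq_one]
  · obtain ⟨⟨a, ε⟩, rfl⟩ := cubeVertex_bijective.surjective w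
    have sign_swap_last (i : Fin 3) : sign (swap i.castSucc (Fin.last 3)) = -1 :=
      sign_swap i.castSucc_ne_last
    simp only [cubeGraph_adj, cubeVertex_inj, ← exists_apply_mul_swap_eq_iff, map_mul,
      sign_swap_last, mul_neg_one, exists_and_right, @eq_comm _ ε]

/-- The group `⟨(1,2)⟩`, a complement of the rotations `C_3` in `S_3`. -/
abbrev swapSubgroup : Subgroup (Perm (Fin 4)) := Subgroup.zpowers (swap 0 1)

theorem swapSubgroup_le_lastStabilizer : swapSubgroup ≤ lastStabilizer :=
  Subgroup.zpowers_le.2 (by decide)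

theorem card_swapSubgroup : Nat.card swapSubgroup = 2 :=
  (Nat.card_zpowers _).trans (IsSwap.orderOf ⟨0, 1, by decide, rfl⟩)

theorem mem_swapSubgroup {h : Perm (Fin 4)} : h ∈ swapSubgroup ↔ h = 1 ∨ h = swap 0 1 := by
  rw [mem_zpowers_iff_mem_range_orderOf, ← Nat.card_zpowers, card_swapSubgroup]
  simp [Finset.range_add_one, or_comm]

theorem exists_mk_mul_swap_eq_of_adj {ξ α β : Perm (Fin 4)}
    (hα : (α : Perm (Fin 4) ⧸ swapSubgroup) = ξ) (h : starGraph3.Adj α β) :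
    ∃ i : Fin 3, (↑(ξ * swap i.castSucc (Fin.last 3)) : Perm (Fin 4) ⧸ swapSubgroup) = β := by
  have hγ : α⁻¹ * ξ ∈ swapSubgroup := QuotientGroup.eq.1 hα
  obtain ⟨i, hi⟩ := starGraph3_adj.1
    (starGraph3_adj_mul_right (swapSubgroup_le_lastStabilizer hγ) h)
  rw [mul_inv_cancel_left] at hi
  exact ⟨i, by rw [hi, QuotientGroup.mk_mul_of_mem _ hγ]⟩

theorem truncT_adj_mk {ξ : Perm (Fin 4)} {w : Perm (Fin 4) ⧸ swapSubgroup} :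
    truncT.Adj ξ w ↔ ∃ i : Fin 3, ↑(ξ * swap i.castSucc (Fin.last 3)) = w := by
  rw [truncT, SimpleGraph.fromRel_adj]
  constructor
  · rintro ⟨-, ⟨α, β, hα, rfl, h⟩ | ⟨β, α, rfl, hα, h⟩⟩
    · exact exists_mk_mul_swap_eq_of_adj hα h
    · exact exists_mk_mul_swap_eq_of_adj hα h.symm
  · rintro ⟨i, rfl⟩
    refine ⟨fun h => i.castSucc_ne_last ?_, .inl ⟨_, _, rfl, rfl, starGraph3_adj.2 ⟨i, rfl⟩⟩⟩
    have apply_last_eq : ξ (Fin.last 3) = (ξ * swap i.castSucc (Fin.last 3)) (Fin.last 3) :=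
      inv_mul_mem_lastStabilizer.1 (swapSubgroup_le_lastStabilizer (QuotientGroup.eq.1 h))
    simpa using apply_last_eq.symm

theorem isOrbitCovering_truncT :
    IsOrbitCovering starAut (swapSubgroup.subgroupOf lastStabilizer) truncT QuotientGroup.mk := by
  refine isOrbitCovering_starAut QuotientGroup.mk_surjective (fun ξ η => ?_)
    fun _ _ => truncT_adj_mk
  rw [QuotientGroup.eq, ← inv_mul_mem_lastStabilizer, iff_and_self]
  exact fun h => swapSubgroup_le_lastStabilizer h

theorem isFrobeniusPair_lastStabilizer :
    IsFrobeniusPair ((alternatingGroup (Fin 4)).subgroupOf lastStabilizer)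
      (swapSubgroup.subgroupOf lastStabilizer) := by
  have conj_injective : ∀ n m : Perm (Fin 4), n (Fin.last 3) = Fin.last 3 ∧ sign n = 1 →
      m (Fin.last 3) = Fin.last 3 ∧ sign m = 1 →
      n * swap 0 1 * n⁻¹ = m * swap 0 1 * m⁻¹ → n = m := by
    decide +kernel
  have conj_surjective : ∀ g : Perm (Fin 4), g (Fin.last 3) = Fin.last 3 → sign g ≠ 1 →
      ∃ n : Perm (Fin 4), n (Fin.last 3) = Fin.last 3 ∧ sign n = 1 ∧ n * swap 0 1 * n⁻¹ = g := by
    decide +kernel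
  have eq_swap {h : lastStabilizer} (hh : (h : Perm (Fin 4)) ∈ swapSubgroup ∧ h ≠ 1) :
      (h : Perm (Fin 4)) = swap 0 1 :=
    (mem_swapSubgroup.1 hh.1).resolve_left fun h_one => hh.2 (Subtype.ext h_one)
  refine ⟨?_, ?_, ?_⟩
  · rintro ⟨n, h⟩ ⟨-, hh⟩ hg
    have sign_conj : sign (n * h * n⁻¹ : Perm (Fin 4)) = 1 := hg
    rw [eq_swap hh] at sign_conj
    simp at sign_conj
  · rintro ⟨n, h⟩ ⟨hn, hh⟩ ⟨m, k⟩ ⟨hm, hk⟩ hnm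
    have conj_eq : (n * h * n⁻¹ : Perm (Fin 4)) = m * k * m⁻¹ := congrArg Subtype.val hnm
    rw [eq_swap hh, eq_swap hk] at conj_eq
    exact Prod.ext (Subtype.ext (conj_injective n m ⟨n.2, hn⟩ ⟨m.2, hm⟩ conj_eq))
      (Subtype.ext ((eq_swap hh).trans (eq_swap hk).symm))
  · intro g hg
    obtain ⟨n, hn, sign_n, conj_eq⟩ := conj_surjective g g.2 hg
    exact ⟨(⟨n, hn⟩, ⟨swap 0 1, by decide⟩), ⟨sign_n, mem_swapSubgroup.2 (.inr rfl),
      fun h => by simpa using congrArg Subtype.val h⟩, Subtype.ext conj_eq⟩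

/-- `Spec(X_3) ∪ Spec(K_4) ∪ Spec(K_4) = Spec(Q) ∪ Spec(T) ∪ Spec(T)` as multisets. -/
theorem spectra_multiset_relation :
    adjSpectrum starGraph3 + adjSpectrum (⊤ : SimpleGraph (Fin 4))
        + adjSpectrum (⊤ : SimpleGraph (Fin 4)) =
      adjSpectrum cubeGraph + adjSpectrum truncT + adjSpectrum truncT := by
  have spectra := isFrobeniusPair_lastStabilizer.adjSpectrum_add_nsmul isOrbitCovering_completeGraph
    isOrbitCovering_cubeGraph isOrbitCovering_truncT
  have card_H : Nat.card (swapSubgroup.subgroupOf lastStabilizer) = 2 := by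
    rw [Nat.card_congr (Subgroup.subgroupOfEquivOfLe swapSubgroup_le_lastStabilizer).toEquiv,
      card_swapSubgroup]
  simpa only [card_H, two_nsmul, ← add_assoc] using spectra
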